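/- For every integer n ≥ 2, Σ_{ω ∈ R(w_0^B)} m(ω) = 2(n² − 3) · |R(w′)|, where m(ω) denotes the number of 01 moves in ω. -/

import Mathlib

/-- The generator `sᵢ` of the hyperoctahedral group `Bₙ`, realized as a permutation of `ℤ`:
`s₀` swaps `1` and `-1`; for `i ≥ 1`, `sᵢ` swaps `i` with `i+1` and `-i` with `-(i+1)`,
fixing all other integers. -/
def sB (i : ℕ) : Equiv.Perm ℤ :=
  if i = 0 then Equiv.swap 1 (-1)
  else Equiv.swap (i : ℤ) ((i : ℤ) + 1) * Equiv.swap (-(i : ℤ)) (-((i : ℤ) + 1))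

/-- The product `s_{i₁} ⋯ s_{i_ℓ}` corresponding to the word `i₁ ⋯ i_ℓ`. -/
def wordProd (l : List ℕ) : Equiv.Perm ℤ := (l.map sB).prod

/-- The underlying function of the longest element `w₀ᴮ ∈ Bₙ`: `i ↦ -i` on `{-n, …, n}`,
fixing all other integers. -/
def w0BFun (n : ℕ) : ℤ → ℤ := fun i => if -(n : ℤ) ≤ i ∧ i ≤ (n : ℤ) then -i else i

lemma w0BFun_involutive (n : ℕ) : Function.Involutive (w0BFun n) := by
  intro i
  unfold w0BFun
  split_ifs <;> omega

/-- The longest element `w₀ᴮ ∈ Bₙ`, as a permutation of `ℤ`. -/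
def w0B (n : ℕ) : Equiv.Perm ℤ := (w0BFun_involutive n).toPerm

/-- `l` is a reduced decomposition of `w` in `Bₙ`: a word over the alphabet `{0, …, n-1}`
whose product of generators is `w`, of minimal length among all such words. -/
def IsReducedWord (n : ℕ) (w : Equiv.Perm ℤ) (l : List ℕ) : Prop :=
  (∀ i ∈ l, i < n) ∧ wordProd l = w ∧
    ∀ l' : List ℕ, (∀ i ∈ l', i < n) → wordProd l' = w → l.length ≤ l'.length

/-- `R(w)`, the set of reduced decompositions of `w` in `Bₙ`. -/
def RSet (n : ℕ) (w : Equiv.Perm ℤ) : Set (List ℕ) := {l | IsReducedWord n w l}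

/-- The length `ℓ(w)` of `w ∈ Bₙ`: the minimal length of a word over `{0, …, n-1}`
whose product of generators is `w`. -/
noncomputable def lenB (n : ℕ) (w : Equiv.Perm ℤ) : ℕ :=
  sInf {m : ℕ | ∃ l : List ℕ, (∀ i ∈ l, i < n) ∧ wordProd l = w ∧ l.length = m}

/-- Whether a word begins with `k (k+1) k` or `(k+1) k (k+1)` for some `k ≥ 1`. -/
def isYB : List ℕ → Bool
  | a :: b :: c :: _ => (a != 0 && b == a + 1 && c == a) || (b != 0 && a == b + 1 && c == b + 1)
  | _ => false

/-- The number of Yang–Baxter moves in a word. -/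
def ybCount (l : List ℕ) : ℕ :=
  ((Finset.range l.length).filter fun j => isYB (l.drop j) = true).card

/-- Whether a word begins with `0101` or `1010`. -/
def is01 : List ℕ → Bool
  | a :: b :: c :: d :: _ =>
      (a == 0 && b == 1 && c == 0 && d == 1) || (a == 1 && b == 0 && c == 1 && d == 0)
  | _ => false

/-- The number of 01 moves in a word. -/
def m01Count (l : List ℕ) : ℕ :=
  ((Finset.range l.length).filter fun j => is01 (l.drop j) = true).card

/-- The underlying function of `w_k ∈ Bₙ`: `k ↦ -(k+2)`, `k+2 ↦ -k`, and `i ↦ -i` for all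
other `i ∈ {1, …, n}`, extended by `w(-i) = -w(i)` and fixing all integers outside
`{-n, …, -1, 1, …, n}`. -/
def wkFun (n k : ℕ) : ℤ → ℤ := fun i =>
  if -(n : ℤ) ≤ i ∧ i ≤ (n : ℤ) then
    if i = (k : ℤ) then -((k : ℤ) + 2)
    else if i = (k : ℤ) + 2 then -(k : ℤ)
    else if i = -(k : ℤ) then (k : ℤ) + 2
    else if i = -((k : ℤ) + 2) then (k : ℤ)
    else -i
  else i

/-- The underlying function of `w' ∈ Bₙ`: `1 ↦ 1`, `2 ↦ 2`, and `i ↦ -i` for `3 ≤ i ≤ n`,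
extended by `w(-i) = -w(i)` and fixing all integers outside `{-n, …, -1, 1, …, n}`. -/
def wpFun (n : ℕ) : ℤ → ℤ := fun i =>
  if (-(n : ℤ) ≤ i ∧ i ≤ (n : ℤ)) ∧ (i < -2 ∨ 2 < i) then -i else i

/-- `w`, viewed as a signed permutation of `{1, …, n}` via the values `w(1), …, w(n)`,
contains the signed pattern `p` (given by its list of values `p(1), …, p(m)`). -/
def ContainsPattern (n : ℕ) (w : ℤ → ℤ) (p : List ℤ) : Prop :=
  ∃ j : Fin p.length → ℤ, StrictMono j ∧ (∀ r, 1 ≤ j r ∧ j r ≤ (n : ℤ)) ∧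
    (∀ r s, w (j r) < w (j s) ↔ p.get r < p.get s) ∧
    (∀ r, w (j r) < 0 ↔ p.get r < 0)

lemma sB_apply (i : ℕ) (x : ℤ) : sB i x =
    if i = 0 then (if x = 1 then -1 else if x = -1 then 1 else x)
    else if x = i then (i : ℤ) + 1 else if x = i + 1 then (i : ℤ)
    else if x = -i then -((i : ℤ) + 1) else if x = -((i : ℤ) + 1) then -(i : ℤ) else x := by
  unfold sB
  by_cases h : i = 0
  · simp [h, Equiv.swap_apply_def]
  · simp only [h, if_false, Equiv.Perm.mul_apply, Equiv.swap_apply_def]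
    split_ifs <;> omega

lemma wordProd_nil : wordProd [] = 1 := rfl

lemma wordProd_cons (i : ℕ) (l : List ℕ) : wordProd (i :: l) = sB i * wordProd l := by
  simp [wordProd]

lemma wordProd_append (l m : List ℕ) : wordProd (l ++ m) = wordProd l * wordProd m := by
  simp [wordProd]

lemma w0B_apply (n : ℕ) (x : ℤ) :
    w0B n x = if -(n : ℤ) ≤ x ∧ x ≤ (n : ℤ) then -x else x := rfl

/-- `w0B` commutes with the generators. -/
lemma w0B_comm_sB (n i : ℕ) (hi : i < n) : w0B n * sB i = sB i * w0B n := by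
  ext x
  simp only [Equiv.Perm.mul_apply, sB_apply, w0B_apply]
  split_ifs <;> omega

lemma w0B_comm_word (n : ℕ) (l : List ℕ) (hl : ∀ i ∈ l, i < n) :
    w0B n * wordProd l = wordProd l * w0B n := by
  induction l with
  | nil => simp [wordProd_nil]
  | cons i l ih =>
    rw [wordProd_cons, ← mul_assoc, w0B_comm_sB n i (hl i (by simp)), mul_assoc,
      ih (fun j hj => hl j (by simp [hj])), mul_assoc]

lemma sB_odd (i : ℕ) (x : ℤ) : sB i (-x) = - sB i x := by
  simp only [sB_apply]
  split_ifs <;> omega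

lemma word_odd (l : List ℕ) (x : ℤ) : wordProd l (-x) = - wordProd l x := by
  induction l with
  | nil => simp [wordProd_nil]
  | cons i l ih => simp [wordProd_cons, Equiv.Perm.mul_apply, ih, sB_odd]

/-- The positive roots of type B, as pairs `⟨k, a⟩` standing for the pair `a < k + 1`. -/
noncomputable def posB (n : ℕ) : Finset (Σ _ : ℕ, ℤ) :=
  (Finset.range n).sigma fun k => (Finset.Icc (-((k : ℤ) + 1)) k).erase 0

lemma posB_card (n : ℕ) : (posB n).card = n ^ 2 := by
  unfold posB
  rw [Finset.card_sigma]
  have : ∀ k ∈ Finset.range n,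
      ((Finset.Icc (-((k : ℤ) + 1)) k).erase 0).card = 2 * k + 1 := by
    intro k _
    rw [Finset.card_erase_of_mem (by simp), Int.card_Icc]
    omega
  rw [Finset.sum_congr rfl this]
  induction n with
  | zero => simp
  | succ n ih =>
    rw [Finset.sum_range_succ, ih (fun k hk => this k (by simp at hk ⊢; omega))]
    ring

/-- The inversion set of `w`. -/
noncomputable def invB (n : ℕ) (w : Equiv.Perm ℤ) : Finset (Σ _ : ℕ, ℤ) :=
  (posB n).filter fun p => w ((p.1 : ℤ) + 1) < w p.2

lemma mem_invB (n : ℕ) (w : Equiv.Perm ℤ) (k : ℕ) (a : ℤ) :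
    (⟨k, a⟩ : Σ _ : ℕ, ℤ) ∈ invB n w ↔
      (k < n ∧ a ≠ 0 ∧ -((k : ℤ) + 1) ≤ a ∧ a ≤ k) ∧ w ((k : ℤ) + 1) < w a := by
  unfold invB posB
  rw [Finset.mem_filter, Finset.mem_sigma, Finset.mem_erase, Finset.mem_Icc, Finset.mem_range]

lemma invB_step (n i : ℕ) (w : Equiv.Perm ℤ) (hw : ∀ x, w (-x) = - w x) :
    (invB n (sB i * w)).card ≤ (invB n w).card + 1 := by
  have h1 : (invB n (sB i * w) \ invB n w).card ≤ 1 := by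
    rw [Finset.card_le_one]
    have key : ∀ p ∈ invB n (sB i * w) \ invB n w,
        (p.2 < (p.1 : ℤ) + 1 ∧ -((p.1 : ℤ) + 1) ≤ p.2) ∧
        ((i = 0 ∧ w p.2 = -1 ∧ w ((p.1 : ℤ) + 1) = 1) ∨
        (i ≠ 0 ∧ ((w p.2 = i ∧ w ((p.1 : ℤ) + 1) = i + 1) ∨
          (w p.2 = -(i + 1) ∧ w ((p.1 : ℤ) + 1) = -i)))) := by
      rintro ⟨k, a⟩ hp
      rw [Finset.mem_sdiff, mem_invB, mem_invB, Equiv.Perm.mul_apply,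
        Equiv.Perm.mul_apply] at hp
      simp only
      obtain ⟨⟨hm, hlt⟩, hn⟩ := hp
      have hge : ¬ (w ((k : ℤ) + 1) < w a) := fun h => hn ⟨hm, h⟩
      have h0 : w 0 = 0 := by have := hw 0; simp at this; omega
      have hne : w a ≠ w ((k : ℤ) + 1) := fun h => by have := w.injective h; omega
      have ha0 : w a ≠ 0 := fun h => hm.2.1 (w.injective (h.trans h0.symm))
      have hb0 : w ((k : ℤ) + 1) ≠ 0 := fun h => by
        have := w.injective (h.trans h0.symm); omega
      refine ⟨by omega, ?_⟩
      generalize w a = u at *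
      generalize w ((k : ℤ) + 1) = v at *
      simp only [sB_apply] at hlt
      split_ifs at hlt <;> omega
    rintro ⟨k, a⟩ hp ⟨k', a'⟩ hq
    have A := key _ hp
    have B := key _ hq
    simp only at A B
    have e1 : w a = w a' → a = a' := fun h => w.injective h
    have e2 : w ((k : ℤ) + 1) = w ((k' : ℤ) + 1) → (k : ℤ) + 1 = k' + 1 :=
      fun h => w.injective h
    have e3 : w a = - w ((k' : ℤ) + 1) → a = -((k' : ℤ) + 1) :=
      fun h => w.injective (h.trans (hw _).symm)
    have e4 : w a' = - w ((k : ℤ) + 1) → a' = -((k : ℤ) + 1) :=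
      fun h => w.injective (h.trans (hw _).symm)
    have e5 : a = -((k : ℤ) + 1) → w a = - w ((k : ℤ) + 1) := fun h => by rw [h, hw]
    have : a = a' ∧ k = k' := by omega
    obtain ⟨rfl, rfl⟩ := this
    rfl
  have h2 := Finset.card_le_card_sdiff_add_card (s := invB n (sB i * w)) (t := invB n w)
  omega

lemma invB_word (n : ℕ) (l : List ℕ) : (invB n (wordProd l)).card ≤ l.length := by
  induction l with
  | nil =>
    rw [wordProd_nil]
    simp only [List.length_nil, Nat.le_zero, Finset.card_eq_zero, invB]
    rw [Finset.filter_eq_empty_iff]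
    rintro ⟨k, a⟩ hp
    simp [posB] at hp ⊢
    omega
  | cons i l ih =>
    rw [wordProd_cons]
    have := invB_step n i (wordProd l) (word_odd l)
    simp only [List.length_cons]
    omega

lemma w0B_length_ge (n : ℕ) (l : List ℕ) (h : wordProd l = w0B n) : n ^ 2 ≤ l.length := by
  have h1 := invB_word n l
  rw [h] at h1
  have h2 : invB n (w0B n) = posB n := by
    unfold invB
    rw [Finset.filter_eq_self]
    rintro ⟨k, a⟩ hp
    simp [posB, w0B_apply] at hp ⊢
    split_ifs <;> omega
  rw [h2, posB_card] at h1
  exact h1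

/-- Word negating `k + 1`. -/
def tword : ℕ → List ℕ
  | 0 => [0]
  | k + 1 => (k + 1) :: (tword k ++ [k + 1])

lemma tword_length (k : ℕ) : (tword k).length = 2 * k + 1 := by
  induction k with
  | zero => rfl
  | succ k ih => simp [tword, ih]; omega

lemma tword_lt (k : ℕ) : ∀ i ∈ tword k, i < k + 1 := by
  induction k with
  | zero => simp [tword]
  | succ k ih =>
    intro i hi
    simp only [tword, List.mem_cons, List.mem_append, List.not_mem_nil, or_false] at hi
    rcases hi with h | h | h
    · omega
    · have := ih i h; omega
    · omega

lemma tword_apply (k : ℕ) (x : ℤ) : wordProd (tword k) x =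
    if x = k + 1 ∨ x = -((k : ℤ) + 1) then -x else x := by
  induction k generalizing x with
  | zero =>
    simp only [tword, wordProd_cons, wordProd_nil, mul_one, sB_apply]
    split_ifs <;> omega
  | succ k ih =>
    simp only [tword, wordProd_cons, wordProd_append, wordProd_nil, mul_one,
      Equiv.Perm.mul_apply, ih]
    simp only [sB_apply]
    push_cast
    split_ifs <;> omega

/-- Word for `w'` in `B_{k+2}`. -/
def vword : ℕ → List ℕ
  | 0 => []
  | k + 1 => vword k ++ tword (k + 2)

lemma vword_length (k : ℕ) : (vword k).length + 4 = (k + 2) ^ 2 := by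
  induction k with
  | zero => rfl
  | succ k ih =>
    simp only [vword, List.length_append, tword_length]
    nlinarith

lemma vword_lt (k : ℕ) : ∀ i ∈ vword k, i < k + 2 := by
  induction k with
  | zero => simp [vword]
  | succ k ih =>
    intro i hi
    simp only [vword, List.mem_append] at hi
    rcases hi with h | h
    · have := ih i h; omega
    · have := tword_lt _ i h; omega

lemma vword_apply (k : ℕ) (x : ℤ) : wordProd (vword k) x = wpFun (k + 2) x := by
  induction k generalizing x with
  | zero =>
    simp only [vword, wordProd_nil, wpFun, Equiv.Perm.one_apply]
    split_ifs <;> omega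
  | succ k ih =>
    simp only [vword, wordProd_append, Equiv.Perm.mul_apply, ih, tword_apply, wpFun]
    push_cast
    split_ifs <;> omega

lemma prod0101 (n : ℕ) (hn : 2 ≤ n) (w : Equiv.Perm ℤ) (hw : ∀ i : ℤ, w i = wpFun n i) :
    wordProd [0, 1, 0, 1] * w = w0B n := by
  ext x
  simp only [wordProd_cons, wordProd_nil, mul_one, Equiv.Perm.mul_apply, hw, w0B_apply]
  have h : ∀ y, sB 0 (sB 1 (sB 0 (sB 1 y))) = if -2 ≤ y ∧ y ≤ 2 then -y else y := by
    intro y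
    by_cases hy : -2 ≤ y ∧ y ≤ 2
    · obtain ⟨h1, h2⟩ := hy
      interval_cases y <;> simp [sB_apply]
    · have a1 : sB 1 y = y := by simp only [sB_apply]; split_ifs <;> omega
      have a0 : sB 0 y = y := by simp only [sB_apply]; split_ifs <;> omega
      simp only [a0, a1, if_neg hy]
  rw [h]
  unfold wpFun
  split_ifs <;> omega

lemma prod1010 : wordProd [1, 0, 1, 0] = wordProd [0, 1, 0, 1] := by
  ext x
  simp only [wordProd_cons, wordProd_nil, mul_one, Equiv.Perm.mul_apply]
  by_cases hy : -2 ≤ x ∧ x ≤ 2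
  · obtain ⟨h1, h2⟩ := hy
    interval_cases x <;> simp [sB_apply]
  · have a1 : sB 1 x = x := by simp only [sB_apply]; split_ifs <;> omega
    have a0 : sB 0 x = x := by simp only [sB_apply]; split_ifs <;> omega
    simp only [a0, a1]

lemma mem_R_w0 (n : ℕ) (hn : 2 ≤ n) (w : Equiv.Perm ℤ) (hw : ∀ i : ℤ, w i = wpFun n i)
    (l : List ℕ) : l ∈ RSet n (w0B n) ↔
      (∀ i ∈ l, i < n) ∧ wordProd l = w0B n ∧ l.length = n ^ 2 := by
  obtain ⟨k, rfl⟩ := Nat.exists_eq_add_of_le' hn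
  have hv : wordProd (vword k) = w := by
    ext x; rw [vword_apply, hw]
  constructor
  · rintro ⟨h1, h2, h3⟩
    refine ⟨h1, h2, le_antisymm ?_ (w0B_length_ge _ _ h2)⟩
    have := h3 ([0, 1, 0, 1] ++ vword k) (by
      intro i hi
      have := vword_lt k i
      simp only [List.mem_append, List.mem_cons, List.not_mem_nil, or_false] at hi
      rcases hi with h | h
      · omega
      · exact this h) (by rw [wordProd_append, hv, prod0101 _ hn w hw])
    rw [← vword_length]
    simp at this
    omega
  · rintro ⟨h1, h2, h3⟩
    exact ⟨h1, h2, fun l' _ h => h3 ▸ w0B_length_ge _ _ h⟩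

lemma mem_R_w (n : ℕ) (hn : 2 ≤ n) (w : Equiv.Perm ℤ) (hw : ∀ i : ℤ, w i = wpFun n i)
    (l : List ℕ) : l ∈ RSet n w ↔
      (∀ i ∈ l, i < n) ∧ wordProd l = w ∧ l.length + 4 = n ^ 2 := by
  have hlow : ∀ l', wordProd l' = w → n ^ 2 ≤ l'.length + 4 := by
    intro l' h
    have := w0B_length_ge n ([0, 1, 0, 1] ++ l') (by
      rw [wordProd_append, h, prod0101 _ hn w hw])
    simp at this
    omega
  obtain ⟨k, rfl⟩ := Nat.exists_eq_add_of_le' hn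
  have hv : wordProd (vword k) = w := by
    ext x; rw [vword_apply, hw]
  constructor
  · rintro ⟨h1, h2, h3⟩
    refine ⟨h1, h2, le_antisymm ?_ (hlow _ h2)⟩
    have := h3 (vword k) (vword_lt k) hv
    rw [← vword_length]
    omega
  · rintro ⟨h1, h2, h3⟩
    refine ⟨h1, h2, fun l' _ h => ?_⟩
    have := hlow l' h
    omega

lemma finite_words (n m : ℕ) : {l : List ℕ | (∀ i ∈ l, i < n) ∧ l.length = m}.Finite := by
  have h := List.finite_length_eq (Fin n) m
  refine (h.image (List.map Fin.val)).subset ?_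
  rintro l ⟨h1, h2⟩
  refine ⟨l.pmap (fun i hi => ⟨i, hi⟩) h1, by simp [h2], ?_⟩
  simp [List.map_pmap]

lemma is01_iff (l : List ℕ) : is01 l = true ↔
    ∃ v, l = [0, 1, 0, 1] ++ v ∨ l = [1, 0, 1, 0] ++ v := by
  match l with
  | a :: b :: c :: d :: v => 
    simp only [is01, Bool.or_eq_true, Bool.and_eq_true, beq_iff_eq, List.cons_append,
      List.nil_append, List.cons.injEq]
    constructor
    · intro h
      exact ⟨v, by tauto⟩
    · rintro ⟨u, h⟩
      tauto
  | [] => simp [is01]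
  | [a] => simp [is01]
  | [a, b] => simp [is01]
  | [a, b, c] => simp [is01]

lemma is01_append (l m : List ℕ) (h : 4 ≤ l.length) : is01 (l ++ m) = is01 l := by
  match l, h with
  | a :: b :: c :: d :: v, _ => rfl

lemma is01_short (l : List ℕ) (h : l.length < 4) : is01 l = false := by
  match l, h with
  | [], _ => rfl
  | [a], _ => rfl
  | [a, b], _ => rfl
  | [a, b, c], _ => rfl
  | a :: b :: c :: d :: v, h => simp at h; omega

lemma rotate_mem (n : ℕ) (j : ℕ) (l : List ℕ) (h1 : ∀ i ∈ l, i < n)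
    (h2 : wordProd l = w0B n) : wordProd (l.rotate j) = w0B n := by
  rw [List.rotate_eq_drop_append_take_mod]
  set k := j % l.length
  have h3 : wordProd (l.take k) * wordProd (l.drop k) = w0B n := by
    rw [← wordProd_append, List.take_append_drop, h2]
  have h4 := w0B_comm_word n (l.take k) (fun i hi => h1 i (List.mem_of_mem_take hi))
  rw [wordProd_append]
  rw [← h3, mul_assoc] at h4
  rw [mul_left_cancel h4, h3]

lemma card_start (n : ℕ) (hn : 2 ≤ n) (w : Equiv.Perm ℤ) (hw : ∀ i : ℤ, w i = wpFun n i)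
    (S T : Finset (List ℕ)) (hS : ∀ l, l ∈ S ↔ l ∈ RSet n (w0B n))
    (hT : ∀ l, l ∈ T ↔ l ∈ RSet n w) :
    (S.filter fun l => is01 l = true).card = 2 * T.card := by
  have hp := prod0101 n hn w hw
  have e : (S.filter fun l => is01 l = true) =
      T.image (fun v => [0, 1, 0, 1] ++ v) ∪ T.image (fun v => [1, 0, 1, 0] ++ v) := by
    have aux : ∀ u : List ℕ, u.length = 4 → (∀ i ∈ u, i < n) →
        wordProd u = wordProd [0, 1, 0, 1] → ∀ v, u ++ v ∈ S ↔ v ∈ T := by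
      intro u h4 hu hpu v
      rw [hS, hT, mem_R_w0 n hn w hw, mem_R_w n hn w hw, wordProd_append, hpu, ← hp,
        mul_right_inj, List.length_append, h4, add_comm 4]
      simp only [List.mem_append]
      constructor
      · rintro ⟨a, b⟩
        exact ⟨fun i hi => a i (Or.inr hi), b⟩
      · rintro ⟨a, b⟩
        exact ⟨fun i hi => hi.elim (hu i) (a i), b⟩
    have a1 := aux [0, 1, 0, 1] rfl (by simp; omega) rfl
    have a2 := aux [1, 0, 1, 0] rfl (by simp; omega) prod1010
    ext l
    rw [Finset.mem_filter, Finset.mem_union, Finset.mem_image, Finset.mem_image, is01_iff]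
    constructor
    · rintro ⟨h, v, rfl | rfl⟩
      · exact Or.inl ⟨v, (a1 v).1 h, rfl⟩
      · exact Or.inr ⟨v, (a2 v).1 h, rfl⟩
    · rintro (⟨v, h, rfl⟩ | ⟨v, h, rfl⟩)
      · exact ⟨(a1 v).2 h, v, Or.inl rfl⟩
      · exact ⟨(a2 v).2 h, v, Or.inr rfl⟩
  rw [e, Finset.card_union_of_disjoint, Finset.card_image_of_injective,
    Finset.card_image_of_injective]
  · ring
  · exact List.append_right_injective _
  · exact List.append_right_injective _
  · rw [Finset.disjoint_left]
    intro l h h'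
    rw [Finset.mem_image] at h h'
    obtain ⟨v, _, rfl⟩ := h
    obtain ⟨v', _, h⟩ := h'
    simp at h

lemma card_at (n : ℕ) (hn : 2 ≤ n) (w : Equiv.Perm ℤ) (hw : ∀ i : ℤ, w i = wpFun n i)
    (S : Finset (List ℕ)) (hS : ∀ l, l ∈ S ↔ l ∈ RSet n (w0B n)) (j : ℕ)
    (hj : j + 4 ≤ n ^ 2) :
    (S.filter fun l => is01 (l.drop j) = true).card =
      (S.filter fun l => is01 l = true).card := by
  have hlen : ∀ l ∈ S, l.length = n ^ 2 := fun l hl =>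
    ((mem_R_w0 n hn w hw l).1 ((hS l).1 hl)).2.2
  have hrot : ∀ l ∈ S, ∀ k, l.rotate k ∈ S := by
    intro l hl k
    rw [hS, mem_R_w0 n hn w hw] at hl ⊢
    obtain ⟨h1, h2, h3⟩ := hl
    exact ⟨fun i hi => h1 i (List.mem_rotate.1 hi), rotate_mem n k l h1 h2, by simpa using h3⟩
  have hdrop : ∀ l ∈ S, is01 (l.rotate j) = is01 (l.drop j) := by
    intro l hl
    have := hlen l hl
    rw [List.rotate_eq_drop_append_take (by omega), is01_append]
    rw [List.length_drop]; omega
  refine Finset.card_bij (fun l _ => l.rotate j) ?_ ?_ ?_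
  · intro l hl
    rw [Finset.mem_filter] at hl ⊢
    exact ⟨hrot l hl.1 j, by rw [hdrop l hl.1]; exact hl.2⟩
  · intro l _ l' _ h
    exact List.rotate_injective j h
  · intro l hl
    rw [Finset.mem_filter] at hl
    have hr : (l.rotate (n ^ 2 - j)).rotate j = l := by
      rw [List.rotate_rotate, Nat.sub_add_cancel (by omega), ← hlen l hl.1, List.rotate_length]
    refine ⟨l.rotate (n ^ 2 - j), ?_, hr⟩
    have hm := hrot l hl.1 (n ^ 2 - j)
    rw [Finset.mem_filter, ← hdrop _ hm, hr]
    exact ⟨hm, hl.2⟩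

/-- For every `n ≥ 2`, with `w = w' ∈ Bₙ`,
`Σ_{ω ∈ R(w₀ᴮ)} m(ω) = 2(n² - 3) · |R(w')|`. -/
theorem sum_01_eq (n : ℕ) (hn : 2 ≤ n)
    (w : Equiv.Perm ℤ) (hw : ∀ i : ℤ, w i = wpFun n i) :
    ∑ᶠ ω ∈ RSet n (w0B n), m01Count ω
      = 2 * (n ^ 2 - 3) * Nat.card ↥(RSet n w) := by
  have fS : (RSet n (w0B n)).Finite := (finite_words n (n ^ 2)).subset fun l hl => by
    rw [mem_R_w0 n hn w hw] at hl
    exact ⟨hl.1, hl.2.2⟩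
  have fT : (RSet n w).Finite := (finite_words n (n ^ 2 - 4)).subset fun l hl => by
    rw [mem_R_w n hn w hw] at hl
    exact ⟨hl.1, by omega⟩
  have hS : ∀ l, l ∈ fS.toFinset ↔ l ∈ RSet n (w0B n) := fun l => by simp
  have hT : ∀ l, l ∈ fT.toFinset ↔ l ∈ RSet n w := fun l => by simp
  rw [finsum_mem_eq_finite_toFinset_sum _ fS, Nat.card_coe_set_eq,
    Set.ncard_eq_toFinset_card _ fT]
  generalize fS.toFinset = S at *
  generalize fT.toFinset = T at *
  have hlen : ∀ l ∈ S, l.length = n ^ 2 := fun l hl =>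
    ((mem_R_w0 n hn w hw l).1 ((hS l).1 hl)).2.2
  have h4 : 4 ≤ n ^ 2 := by nlinarith
  have hm : ∀ l ∈ S, m01Count l =
      ∑ j ∈ Finset.range (n ^ 2 - 3), if is01 (l.drop j) = true then 1 else 0 := by
    intro l hl
    unfold m01Count
    rw [Finset.card_filter, hlen l hl]
    symm
    apply Finset.sum_subset
    · intro j hj
      simp at hj ⊢
      omega
    · intro j _ hj
      rw [is01_short]
      · simp
      · rw [List.length_drop, hlen l hl]
        simp at hj
        omega
  rw [Finset.sum_congr rfl hm, Finset.sum_comm]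
  have hj : ∀ j ∈ Finset.range (n ^ 2 - 3),
      (∑ l ∈ S, if is01 (l.drop j) = true then 1 else 0) = 2 * T.card := by
    intro j hj
    rw [← Finset.card_filter, card_at n hn w hw S hS j (by simp at hj; omega),
      card_start n hn w hw S T hS hT]
  rw [Finset.sum_congr rfl hj, Finset.sum_const, Finset.card_range, smul_eq_mul]
  ring
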